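/- arXiv:1802.04672 — 2 statements merged into one kernel-verified Lean document; each statement's English description precedes it below -/
import Mathlib

section
/- Let f : ℝ → ℝ be continuous, bandlimited to σ rad/s (σ > 0), and satisfy |f(t)| ≤ A/(1+t²) for all t ∈ ℝ and some A > 0. Let α > Aσ, set g(t) = αt + f(t) (a bijection of ℝ), and for β ∈ ℝ define h_β(u) = g⁻¹(u) − βu. Then h_β is of moderate decrease (i.e., continuous with |h_β(u)| ≤ A'/(1+u²) for some A' > 0 and all u) if and only if β = 1/α. -/
/-! The substance is that `g(t) = αt + f(t)` is strictly increasing, which needs Bernstein's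
inequality `|f'| ≤ σ sup |f|` with its sharp constant.  It is proved by M. Riesz's interpolation
argument: on `[-σ, σ]` the function `ω ↦ ω` agrees with a triangle wave of period `4σ`, whose cosine
series has absolutely summable coefficients with sum exactly `σ` (`hasSum_triangle`).  For
`h = 𝓕 G` with `G` supported in `2π|x| ≤ σ`, substituting that series for `2πx` in
`h'(t) = ∫ (-2πix) G(x) e^{-2πixt} dx` writes `h'` as a superposition of translates of `h`, weighted
by these coefficients; hence `|h'| ≤ σ sup |h|` (`bernstein_lipschitz`).  Fourier inversion
represents `f` this way, with `G = 𝓕⁻ f`.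

So `g` is an increasing homeomorphism.  For `u = g(t)` one has `g⁻¹(u) - u/α = -f(t)/α`, which is
`O(1/(1+t²)) = O(1/(1+u²))` because `f` is bounded.  Conversely, if `g⁻¹(u) - βu` is bounded then
`(1/α - β)u` is bounded in `u`, so `β = 1/α`. -/

open Real FourierTransform

/-- A function `f : ℝ → ℝ` is bandlimited to `σ` rad/s if its Fourier transform
`f̂(ξ) = ∫ f(t) e^{−2πiξt} dt` vanishes whenever `2π|ξ| > σ`. -/
def Bandlimited (σ : ℝ) (f : ℝ → ℝ) : Prop :=
  ∀ ξ : ℝ, σ < 2 * Real.pi * |ξ| → 𝓕 (fun t : ℝ => (f t : ℂ)) ξ = 0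

open MeasureTheory

/-! ### The triangle wave -/

/-- The cosine series of the triangle wave; it is the odd-frequency part of the series of the
second Bernoulli polynomial. -/
lemma hasSum_odd_cos {θ : ℝ} (h0 : 0 ≤ θ) (h1 : θ ≤ π) :
    HasSum (fun m : ℕ => cos ((2 * m + 1) * θ) / (2 * m + 1) ^ 2) (π ^ 2 / 8 - π * θ / 4) := by
  have hpi := pi_pos
  have key : ∀ x : ℝ, x ∈ Set.Icc (0 : ℝ) 1 →
      HasSum (fun n : ℕ => 1 / (n : ℝ) ^ 2 * cos (2 * π * n * x))
        (π ^ 2 * (x ^ 2 - x + 6⁻¹)) := by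
    intro x hx
    have h := hasSum_one_div_nat_pow_mul_cos one_ne_zero hx
    have hB : (Polynomial.map (algebraMap ℚ ℝ) (Polynomial.bernoulli (2 * 1))).eval x
        = x ^ 2 - x + 6⁻¹ := bernoulliFun_two x
    rw [hB] at h
    have hc : (-1 : ℝ) ^ (1 + 1) * (2 * π) ^ (2 * 1) / 2 / ((2 * 1).factorial : ℝ) = π ^ 2 := by
      norm_num [Nat.factorial]
      ring
    rwa [hc] at h
  have hx0 : 0 ≤ θ / (2 * π) := by positivity
  have hx1 : θ / (2 * π) ≤ 1 / 2 := by
    rw [div_le_iff₀ (by positivity)]; linarith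
  have hall := key (θ / (2 * π)) ⟨hx0, by linarith⟩
  have heven := (key (2 * (θ / (2 * π))) ⟨by linarith, by linarith⟩).mul_left (1 / 4)
  have heven' : HasSum (fun m : ℕ => 1 / ((2 * m : ℕ) : ℝ) ^ 2 *
      cos (2 * π * (2 * m : ℕ) * (θ / (2 * π))))
      (1 / 4 * (π ^ 2 * ((2 * (θ / (2 * π))) ^ 2 - 2 * (θ / (2 * π)) + 6⁻¹))) := by
    refine Eq.subst (motive := fun F : ℕ → ℝ => HasSum F _) (funext fun m => ?_) heven
    push_cast
    rw [show 2 * π * (2 * (m : ℝ)) * (θ / (2 * π)) = 2 * π * m * (2 * (θ / (2 * π))) by ring]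
    ring
  have hodd := (hall.summable.comp_injective (i := fun m : ℕ => 2 * m + 1)
    (fun a b h => by simpa using h)).hasSum
  have hval := hall.unique (HasSum.even_add_odd heven' hodd)
  rw [← sub_eq_iff_eq_add'] at hval
  rw [← hval] at hodd
  have hgoal : π ^ 2 * ((θ / (2 * π)) ^ 2 - θ / (2 * π) + 6⁻¹)
      - 1 / 4 * (π ^ 2 * ((2 * (θ / (2 * π))) ^ 2 - 2 * (θ / (2 * π)) + 6⁻¹))
      = π ^ 2 / 8 - π * θ / 4 := by
    field_simp
    ring
  rw [hgoal] at hodd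
  refine Eq.subst (motive := fun F : ℕ → ℝ => HasSum F _) (funext fun m => ?_) hodd
  simp only [Function.comp]
  push_cast
  rw [show 2 * π * (2 * (m : ℝ) + 1) * (θ / (2 * π)) = (2 * m + 1) * θ by field_simp]
  ring

/-- On `[-σ, σ]` the identity is a triangle wave of period `4σ`. -/
lemma hasSum_triangle {σ ω : ℝ} (hσ : 0 < σ) (hω : |ω| ≤ σ) :
    HasSum (fun m : ℕ => 8 * σ / π ^ 2 / (2 * m + 1) ^ 2 *
      cos ((2 * m + 1) * (π / 2 - π * ω / (2 * σ)))) ω := by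
  have hpi := pi_pos
  obtain ⟨h1, h2⟩ := abs_le.1 hω
  have e : π * ω / (2 * σ) = π / 2 * (ω / σ) := by field_simp
  have h3 : ω / σ ≤ 1 := by rw [div_le_one hσ]; exact h2
  have h4 : -1 ≤ ω / σ := by rw [le_div_iff₀ hσ]; linarith
  have := (hasSum_odd_cos (θ := π / 2 - π * ω / (2 * σ)) (by rw [e]; nlinarith)
    (by rw [e]; nlinarith)).mul_left (8 * σ / π ^ 2)
  have hval : 8 * σ / π ^ 2 * (π ^ 2 / 8 - π * (π / 2 - π * ω / (2 * σ)) / 4) = ω := by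
    field_simp
    ring
  rw [hval] at this
  refine Eq.subst (motive := fun F : ℕ → ℝ => HasSum F _) (funext fun m => ?_) this
  generalize cos _ = c
  ring

/-- The coefficients of the triangle wave sum to its maximum `σ`, attained at `ω = σ`. -/
lemma hasSum_coeff {σ : ℝ} (hσ : 0 < σ) :
    HasSum (fun m : ℕ => 8 * σ / π ^ 2 / (2 * (m : ℝ) + 1) ^ 2) σ := by
  have := hasSum_triangle hσ (abs_of_pos hσ).le
  convert this using 2 with m
  rw [show π / 2 - π * σ / (2 * σ) = 0 by field_simp; ring]
  simp

/-! ### Bernstein's inequality -/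

/-- Multiplying `G` by a cosine averages two unimodular multiples of translates of `𝓕 G`. -/
lemma norm_integral_cos_mul_le {G : ℝ → ℂ} (hG : Integrable G) {M : ℝ}
    (hM : ∀ t, ‖𝓕 G t‖ ≤ M) (a b t : ℝ) :
    ‖∫ x : ℝ, ((cos (a + b * x) : ℝ) : ℂ) * (Complex.exp (↑(-2 * π * x * t) * Complex.I) • G x)‖
      ≤ M := by
  have hpi := pi_ne_zero
  have hpiC : (π : ℂ) ≠ 0 := by exact_mod_cast hpi
  have hint : ∀ s : ℝ,
      Integrable (fun x : ℝ => Complex.exp (↑(-2 * π * x * s) * Complex.I) • G x) := by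
    intro s
    have hc : Continuous (fun x : ℝ => Complex.exp (↑(-2 * π * x * s) * Complex.I)) := by
      fun_prop
    have hm := hc.aestronglyMeasurable (μ := volume)
    refine hG.norm.mono' (hm.smul hG.1) ?_
    filter_upwards with x
    rw [norm_smul, Complex.norm_exp_ofReal_mul_I, one_mul]
  have e : (∫ x : ℝ, ((cos (a + b * x) : ℝ) : ℂ) *
        (Complex.exp (↑(-2 * π * x * t) * Complex.I) • G x))
      = Complex.exp (a * Complex.I) / 2 * 𝓕 G (t - b / (2 * π))
        + Complex.exp (((-a : ℝ) : ℂ) * Complex.I) / 2 * 𝓕 G (t + b / (2 * π)) := by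
    rw [Real.fourier_real_eq_integral_exp_smul, Real.fourier_real_eq_integral_exp_smul,
      ← integral_const_mul, ← integral_const_mul, ← integral_add]
    · congr 1
      ext x
      rw [Complex.ofReal_cos, Complex.cos]
      simp only [smul_eq_mul]
      have e1 : Complex.exp (a * Complex.I) *
          Complex.exp (↑(-2 * π * x * (t - b / (2 * π))) * Complex.I)
          = Complex.exp (((a + b * x : ℝ) : ℂ) * Complex.I) *
            Complex.exp (↑(-2 * π * x * t) * Complex.I) := by
        rw [← Complex.exp_add, ← Complex.exp_add]
        congr 1
        push_cast
        field_simp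
        ring
      have e2 : Complex.exp (((-a : ℝ) : ℂ) * Complex.I) *
          Complex.exp (↑(-2 * π * x * (t + b / (2 * π))) * Complex.I)
          = Complex.exp (-((a + b * x : ℝ) : ℂ) * Complex.I) *
            Complex.exp (↑(-2 * π * x * t) * Complex.I) := by
        rw [← Complex.exp_add, ← Complex.exp_add]
        congr 1
        push_cast
        field_simp
        ring
      linear_combination (-G x / 2) * e1 + (-G x / 2) * e2
    · exact (hint _).const_mul _
    · exact (hint _).const_mul _
  rw [e]
  refine (norm_add_le _ _).trans ?_
  rw [norm_mul, norm_mul, norm_div, norm_div, Complex.norm_exp_ofReal_mul_I,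
    Complex.norm_exp_ofReal_mul_I]
  have h1 := hM (t - b / (2 * π))
  have h2 := hM (t + b / (2 * π))
  norm_num
  linarith

/-- Bernstein's inequality, in Lipschitz form, for the Fourier transform of an integrable function
supported in `2π|x| ≤ σ`. -/
lemma bernstein_lipschitz {G : ℝ → ℂ} (hG : Integrable G) {σ M : ℝ} (hσ : 0 < σ)
    (hsupp : ∀ x, σ < 2 * π * |x| → G x = 0) (hM : ∀ t, ‖𝓕 G t‖ ≤ M) (x y : ℝ) :
    ‖𝓕 G y - 𝓕 G x‖ ≤ M * σ * |y - x| := by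
  have hpi := pi_pos
  have hxG : Integrable (fun x : ℝ => x • G x) := by
    refine (hG.norm.const_mul (σ / (2 * π))).mono'
      (continuous_id.aestronglyMeasurable.smul hG.1) ?_
    filter_upwards with x
    rw [norm_smul]
    by_cases hx : σ < 2 * π * |x|
    · simp [hsupp x hx]
    · gcongr
      rw [le_div_iff₀ (by positivity), Real.norm_eq_abs]
      linarith
  have hder := fun t => Real.hasDerivAt_fourier hG hxG t
  refine Convex.norm_image_sub_le_of_norm_hasDerivWithin_le
    (fun t _ => (hder t).hasDerivWithinAt) (fun t _ => ?_) convex_univ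
    (Set.mem_univ x) (Set.mem_univ y)
  -- The terms of the triangle series for `2πx`, times `G x e^{-2πixt}`.
  let F : ℕ → ℝ → ℂ := fun m x => ((8 * σ / π ^ 2 / (2 * (m : ℝ) + 1) ^ 2 : ℝ) : ℂ) *
    (((cos ((2 * m + 1) * (π / 2) + (-((2 * m + 1) * π ^ 2 / σ)) * x) : ℝ) : ℂ) *
      (Complex.exp (↑(-2 * π * x * t) * Complex.I) • G x))
  have hbd : ∀ m x, ‖F m x‖ ≤ 8 * σ / π ^ 2 / (2 * (m : ℝ) + 1) ^ 2 * ‖G x‖ := by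
    intro m x
    simp only [F]
    rw [norm_mul, norm_mul, norm_smul, Complex.norm_exp_ofReal_mul_I, one_mul,
      Complex.norm_real, Complex.norm_real, Real.norm_of_nonneg (by positivity)]
    gcongr
    exact mul_le_of_le_one_left (norm_nonneg _) (abs_cos_le_one _)
  have hFint : ∀ m, Integrable (F m) := by
    intro m
    refine (hG.norm.const_mul (8 * σ / π ^ 2 / (2 * (m : ℝ) + 1) ^ 2)).mono' ?_ ?_
    · refine AEStronglyMeasurable.const_mul ?_ _
      refine (Continuous.aestronglyMeasurable (by fun_prop)).mul ?_
      exact (Continuous.aestronglyMeasurable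
        (f := fun x : ℝ => Complex.exp (↑(-2 * π * x * t) * Complex.I)) (by fun_prop)).smul hG.1
    · filter_upwards with x using hbd m x
  have hsum : Summable (fun m => ∫ x, ‖F m x‖) := by
    refine Summable.of_nonneg_of_le (fun m => integral_nonneg fun x => norm_nonneg _)
      (fun m => ?_) ((hasSum_coeff hσ).summable.mul_right (∫ x, ‖G x‖))
    rw [← integral_const_mul]
    exact integral_mono (hFint m).norm (hG.norm.const_mul _) (hbd m)
  have hswap := hasSum_integral_of_summable_integral_norm hFint hsum
  have hpt : ∀ x, ∑' m, F m x =
      ((2 * π * x : ℝ) : ℂ) * (Complex.exp (↑(-2 * π * x * t) * Complex.I) • G x) := by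
    intro x
    by_cases hx : σ < 2 * π * |x|
    · simp [F, hsupp x hx]
    · have h := hasSum_triangle (ω := 2 * π * x) hσ
        (by rw [abs_mul, abs_of_pos (by positivity : 0 < 2 * π)]; linarith)
      have h' := (Complex.hasSum_ofReal.2 h).mul_right
        (Complex.exp (↑(-2 * π * x * t) * Complex.I) • G x)
      rw [← h'.tsum_eq]
      congr 1
      ext m
      simp only [F]
      rw [Complex.ofReal_mul (8 * σ / π ^ 2 / (2 * (m : ℝ) + 1) ^ 2),
        show (2 * (m : ℝ) + 1) * (π / 2) + -((2 * m + 1) * π ^ 2 / σ) * x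
          = (2 * m + 1) * (π / 2 - π * (2 * π * x) / (2 * σ)) by field_simp; ring]
      exact (mul_assoc _ _ _).symm
  have hval : 𝓕 (fun x : ℝ => (-2 * π * Complex.I * x) • G x) t
      = -Complex.I * ∫ x, ∑' m, F m x := by
    rw [Real.fourier_real_eq_integral_exp_smul, ← integral_const_mul]
    congr 1
    ext x
    rw [hpt]
    simp only [smul_eq_mul]
    push_cast
    ring
  rw [hval, norm_mul, norm_neg, Complex.norm_I, one_mul, ← hswap.tsum_eq]
  refine tsum_of_norm_bounded ((hasSum_coeff hσ).mul_left M) fun m => ?_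
  simp only [F]
  rw [integral_const_mul, norm_mul, Complex.norm_real, Real.norm_of_nonneg (by positivity),
    mul_comm M]
  gcongr
  exact norm_integral_cos_mul_le hG hM _ _ _

/-- Bernstein's inequality for `f`, via the representation `f = 𝓕 (𝓕⁻ f)`. -/
lemma Bandlimited.lipschitz {f : ℝ → ℝ} {σ A : ℝ} (hσ : 0 < σ) (hf : Continuous f)
    (hbl : Bandlimited σ f) (hdecay : ∀ t : ℝ, |f t| ≤ A / (1 + t ^ 2)) (hA : 0 < A) (x y : ℝ) :
    |f y - f x| ≤ A * σ * |y - x| := by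
  have hpi := pi_pos
  set φ : ℝ → ℂ := fun t => (f t : ℂ) with hφ
  have hφc : Continuous φ := by fun_prop
  have hφi : Integrable φ := by
    refine (integrable_inv_one_add_sq.const_mul A).mono' hφc.aestronglyMeasurable ?_
    filter_upwards with t
    rw [hφ, Complex.norm_real]
    exact hdecay t
  have hinv : ∀ w, 𝓕⁻ φ w = 𝓕 φ (-w) := fun w => Real.fourierInv_eq_fourier_neg φ w
  have hsupp : ∀ w, σ < 2 * π * |w| → 𝓕 φ w = 0 := hbl
  have hcont : Continuous (𝓕 φ) :=
    VectorFourier.fourierIntegral_continuous Real.continuous_fourierChar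
      (by exact continuous_inner) hφi
  have hFi : Integrable (𝓕 φ) := by
    refine hcont.integrable_of_hasCompactSupport ?_
    refine HasCompactSupport.intro (isCompact_Icc (a := -(σ / (2 * π))) (b := σ / (2 * π))) ?_
    intro w hw
    refine hsupp w ?_
    by_contra! h
    refine hw (abs_le.1 ?_)
    rw [le_div_iff₀ (by positivity)]
    linarith
  have hGi : Integrable (𝓕⁻ φ) := by
    rw [show 𝓕⁻ φ = fun w => 𝓕 φ (-w) from funext hinv]
    exact hFi.comp_neg
  have heq : 𝓕 (𝓕⁻ φ) = φ := hφc.fourier_fourierInv_eq hφi hFi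
  have := bernstein_lipschitz hGi (M := A) hσ
    (fun w hw => by rw [hinv]; exact hsupp _ (by rwa [abs_neg])) (fun t => by
      rw [heq, hφ, Complex.norm_real]
      exact (hdecay t).trans (div_le_self hA.le (by nlinarith [sq_nonneg t]))) x y
  rw [heq, hφ] at this
  rwa [← Complex.ofReal_sub, Complex.norm_real] at this

/-! ### Decay of the inverse -/

/-- `h_β(u) = g⁻¹(u) − βu` is of moderate decrease if and only if `β = 1/α`. -/
theorem moderate_decrease_iff_beta_eq_inv_alpha
    (f : ℝ → ℝ) (σ A α : ℝ) (hσ : 0 < σ) (hA : 0 < A)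
    (hf : Continuous f) (hbl : Bandlimited σ f)
    (hdecay : ∀ t : ℝ, |f t| ≤ A / (1 + t ^ 2))
    (hα : A * σ < α) (β : ℝ) :
    (Continuous (fun u : ℝ =>
        Function.invFun (fun t : ℝ => α * t + f t) u - β * u) ∧
      ∃ A' : ℝ, 0 < A' ∧ ∀ u : ℝ,
        |Function.invFun (fun t : ℝ => α * t + f t) u - β * u| ≤ A' / (1 + u ^ 2))
    ↔ β = 1 / α := by
  have hα0 : 0 < α := lt_trans (by positivity) hα
  set g : ℝ → ℝ := fun t => α * t + f t with hg
  have hfA : ∀ t, |f t| ≤ A := fun t =>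
    (hdecay t).trans (div_le_self hA.le (by nlinarith [sq_nonneg t]))
  have hmono : StrictMono g := by
    intro x y hxy
    have h := hbl.lipschitz hσ hf hdecay hA x y
    rw [abs_of_pos (sub_pos.2 hxy)] at h
    have h1 := (abs_le.1 h).1
    have h2 := mul_lt_mul_of_pos_right hα (sub_pos.2 hxy)
    simp only [hg]
    linarith
  have hsurj : Function.Surjective g := by
    refine Continuous.surjective (by fun_prop) ?_ ?_
    · refine Filter.tendsto_atTop_mono (f := fun t => α * t + -A)
        (fun t => by have := (abs_le.1 (hfA t)).1; simp only [hg]; linarith) ?_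
      exact Filter.tendsto_atTop_add_const_right _ _ (Filter.tendsto_id.const_mul_atTop hα0)
    · refine Filter.tendsto_atBot_mono (g := g) (f := fun t => α * t + A)
        (fun t => by have := (abs_le.1 (hfA t)).2; simp only [hg]; linarith) ?_
      exact Filter.tendsto_atBot_add_const_right _ _ (Filter.tendsto_id.const_mul_atBot hα0)
  have hr : ∀ u, g (Function.invFun g u) = u := Function.rightInverse_invFun hsurj
  have hcont : Continuous (Function.invFun g) := by
    have : Function.invFun g = (hmono.orderIsoOfSurjective g hsurj).symm := by
      ext u
      apply hmono.injective
      rw [hr]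
      exact ((hmono.orderIsoOfSurjective g hsurj).apply_symm_apply u).symm
    rw [this]
    exact OrderIso.continuous _
  have hh : ∀ u, Function.invFun g u - 1 / α * u = -f (Function.invFun g u) / α := by
    intro u
    have h := hr u
    simp only [hg] at h ⊢
    field_simp
    linarith
  constructor
  · rintro ⟨-, A', hA', hb⟩
    -- A linear function bounded above on all of `ℝ` has slope zero.
    have hlin : ∀ u : ℝ, (1 / α - β) * u ≤ A' + A / α := by
      intro u
      have h1 := (hb u).trans (div_le_self hA'.le (by nlinarith [sq_nonneg u]))
      have h2 : |Function.invFun g u - 1 / α * u| ≤ A / α := by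
        rw [hh, abs_div, abs_neg, abs_of_pos hα0]
        gcongr
        exact hfA _
      have h3 := (abs_le.1 h1).2
      have h4 := (abs_le.1 h2).1
      linarith
    by_contra hne
    have hc : 1 / α - β ≠ 0 := fun h => hne (by linarith)
    have := hlin ((A' + A / α + 1) / (1 / α - β))
    rw [mul_div_cancel₀ _ hc] at this
    linarith
  · rintro rfl
    refine ⟨by fun_prop, A * (1 + 2 * α ^ 2 + 2 * A ^ 2) / α, by positivity, fun u => ?_⟩
    rw [hh, abs_div, abs_neg, abs_of_pos hα0]
    have hu := hr u
    set t := Function.invFun g u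
    have h1 := hdecay t
    have h2 : f t ^ 2 ≤ A ^ 2 := sq_le_sq' (abs_le.1 (hfA t)).1 (abs_le.1 (hfA t)).2
    -- `u² = (αt + f t)² ≤ 2α²t² + 2A²`
    have h3 : 1 + u ^ 2 ≤ (1 + 2 * α ^ 2 + 2 * A ^ 2) * (1 + t ^ 2) := by
      rw [← hu]
      simp only [hg]
      nlinarith [sq_nonneg (α * t - f t), sq_nonneg t, sq_nonneg α,
        mul_nonneg (sq_nonneg A) (sq_nonneg t)]
    have h4 : A / (1 + t ^ 2) ≤ A * (1 + 2 * α ^ 2 + 2 * A ^ 2) / (1 + u ^ 2) := by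
      rw [div_le_div_iff₀ (by positivity) (by positivity)]
      nlinarith
    calc |f t| / α ≤ (A * (1 + 2 * α ^ 2 + 2 * A ^ 2) / (1 + u ^ 2)) / α := by
          gcongr; exact h1.trans h4
      _ = _ := by rw [div_right_comm]
end

section
/- Let f₁, f₂ : ℝ → ℝ each be continuous, bandlimited to σ rad/s (σ > 0), and satisfy |f_i(t)| ≤ A/(1+t²) for all t ∈ ℝ and some A > 0. Let α > Aσ, and for i = 1, 2 set g_i(t) = αt + f_i(t) and h_i(u) = g_i⁻¹(u) − u/α. Then the L¹ distance is preserved: ∫_ℝ |h₁(u) − h₂(u)| du = ∫_ℝ |f₁(t) − f₂(t)| dt. -/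
/-!
The Fourier inversion formula writes each `fᵢ` as the Fourier integral of a continuous function
supported in `2π|ξ| ≤ σ`.  On that band the multiplier `2πξ` agrees with a triangle wave whose
cosine series converges absolutely, with total mass of coefficients exactly `σ`.  Integrating the
series term by term expresses `fᵢ'` as a combination of translates of `fᵢ` (the M. Riesz
interpolation formula), which gives Bernstein's inequality with its sharp constant:
`fᵢ` is `Aσ`-Lipschitz (`abs_sub_le_of_bandlimited`).  The constant must be sharp because only `Aσ < α` is assumed.

Hence `gᵢ(t) = αt + fᵢ(t)` is a continuous strictly increasing bijection.  Up to the reflection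
`(t, u) ↦ (u, t)` the graphs of `gᵢ` and `gᵢ⁻¹` coincide, so the planar region between the graphs
of `g₁` and `g₂` is also the region between those of their inverses; computing its area by slicing
in either direction gives the equality (`lintegral_abs_sub_inverse`).  The linear terms cancel in
`g₁ - g₂` and in `h₁ - h₂`.
-/

open Real FourierTransform MeasureTheory

lemma hasSum_of_eq {E : Type*} [AddCommMonoid E] [TopologicalSpace E] {f g : ℕ → E} {a b : E}
    (h : HasSum f a) (hfg : ∀ k, g k = f k) (hab : a = b) : HasSum g b := by
  rw [funext hfg, ← hab]
  exact h

lemma bernoulliTwo_cos (x : ℝ) (hx : x ∈ Set.Icc (0 : ℝ) 1) :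
    HasSum (fun n : ℕ => 1 / (n : ℝ) ^ 2 * Real.cos (2 * π * n * x))
      (π ^ 2 * (x ^ 2 - x + 1 / 6)) := by
  have h := hasSum_one_div_nat_pow_mul_cos one_ne_zero hx
  have : Polynomial.bernoulli 2 = Polynomial.X ^ 2 - Polynomial.X + Polynomial.C (1 / 6) := by
    rw [Polynomial.bernoulli_def]
    simp [Finset.sum_range_succ, bernoulli_two, bernoulli_one, ← Polynomial.C_mul_X_pow_eq_monomial]
    have hC : (Polynomial.C (-1 / 2) : Polynomial ℚ) * 2 = -1 := by
      rw [show (2 : Polynomial ℚ) = Polynomial.C 2 from rfl, ← Polynomial.C_mul]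
      norm_num
    linear_combination Polynomial.X * hC
  refine hasSum_of_eq h (fun k => by rw [mul_one]) ?_
  rw [mul_one, this]
  simp only [Polynomial.map_sub, Polynomial.map_add, Polynomial.map_pow, Polynomial.map_X,
    Polynomial.map_C, Polynomial.eval_add, Polynomial.eval_sub, Polynomial.eval_pow,
    Polynomial.eval_X, Polynomial.eval_C, Nat.factorial]
  push_cast
  simp only [map_ofNat]
  ring

/-- The cosine series of the triangle wave: the sum of `bernoulliTwo_cos` minus its even-index
part. -/
lemma triangle_cos (x : ℝ) (hx : x ∈ Set.Icc (0 : ℝ) (1 / 2)) :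
    HasSum (fun k : ℕ => 1 / ((2 * k + 1 : ℕ) : ℝ) ^ 2 * Real.cos (2 * π * (2 * k + 1 : ℕ) * x))
      (π ^ 2 / 8 * (1 - 4 * x)) := by
  obtain ⟨h0, h1⟩ := hx
  have hall := bernoulliTwo_cos x ⟨h0, by linarith⟩
  have heven := (bernoulliTwo_cos (2 * x) ⟨by linarith, by linarith⟩).mul_left (1 / 4)
  have heven' : HasSum (fun k : ℕ => 1 / ((2 * k : ℕ) : ℝ) ^ 2 *
      Real.cos (2 * π * (2 * k : ℕ) * x))
      (1 / 4 * (π ^ 2 * ((2 * x) ^ 2 - 2 * x + 1 / 6))) := by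
    refine hasSum_of_eq heven (fun k => ?_) rfl
    have : 2 * π * ((2 * k : ℕ) : ℝ) * x = 2 * π * k * (2 * x) := by push_cast; ring
    rw [this]
    push_cast
    ring
  let a : ℕ → ℝ := fun n => 1 / (n : ℝ) ^ 2 * Real.cos (2 * π * n * x)
  have hsodd : Summable (fun k : ℕ => a (2 * k + 1)) :=
    hall.summable.comp_injective (i := fun k : ℕ => 2 * k + 1) fun m n h => by
      simp only at h
      omega
  have heq := (HasSum.even_add_odd (f := a) heven' hsodd.hasSum).unique hall
  have hval : ∑' k : ℕ, a (2 * k + 1) = π ^ 2 / 8 * (1 - 4 * x) := by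
    linear_combination heq
  rw [← hval]
  exact hsodd.hasSum

/-- Multiplying the spectrum by a cosine averages two translates of the Fourier transform, with
unimodular weights, so a bound on the transform persists. -/
lemma norm_integral_cos_le (G : ℝ → ℂ) (hG : Integrable G) (A : ℝ)
    (hA : ∀ w, ‖𝓕 G w‖ ≤ A) (a s w : ℝ) :
    ‖∫ x : ℝ, Complex.exp (↑(-2 * π * x * w) * Complex.I) *
      ((Real.cos (a - 2 * π * x * s) : ℝ) * G x)‖ ≤ A := by
  have hint : ∀ v : ℝ, Integrable
      (fun x : ℝ => Complex.exp (↑(-2 * π * x * v) * Complex.I) * G x) := by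
    intro v
    refine hG.bdd_mul (c := 1) (by fun_prop) (Filter.Eventually.of_forall fun x => ?_)
    rw [Complex.norm_exp_ofReal_mul_I]
  have hF : ∀ v : ℝ, 𝓕 G v = ∫ x : ℝ, Complex.exp (↑(-2 * π * x * v) * Complex.I) * G x := by
    intro v
    rw [Real.fourier_real_eq_integral_exp_smul]
    simp only [smul_eq_mul]
  have key : (∫ x : ℝ, Complex.exp (↑(-2 * π * x * w) * Complex.I) *
      ((Real.cos (a - 2 * π * x * s) : ℝ) * G x)) =
      Complex.exp (a * Complex.I) / 2 * 𝓕 G (w + s) +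
      Complex.exp ((-a : ℝ) * Complex.I) / 2 * 𝓕 G (w - s) := by
    rw [hF, hF, ← integral_const_mul, ← integral_const_mul,
      ← integral_add ((hint _).const_mul _) ((hint _).const_mul _)]
    congr 1
    ext x
    rw [Complex.ofReal_cos, Complex.cos]
    have e1 : Complex.exp (↑(-2 * π * x * (w + s)) * Complex.I) * Complex.exp (a * Complex.I) =
        Complex.exp (↑(-2 * π * x * w) * Complex.I) *
          Complex.exp (↑(a - 2 * π * x * s) * Complex.I) := by
      rw [← Complex.exp_add, ← Complex.exp_add]
      congr 1
      push_cast
      ring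
    have e2 : Complex.exp (↑(-2 * π * x * (w - s)) * Complex.I) *
          Complex.exp ((-a : ℝ) * Complex.I) =
        Complex.exp (↑(-2 * π * x * w) * Complex.I) *
          Complex.exp (-↑(a - 2 * π * x * s) * Complex.I) := by
      rw [← Complex.exp_add, ← Complex.exp_add]
      congr 1
      push_cast
      ring
    linear_combination (-G x / 2) * e1 + (-G x / 2) * e2
  rw [key]
  refine (norm_add_le _ _).trans ?_
  rw [norm_mul, norm_mul, norm_div, norm_div, Complex.norm_exp_ofReal_mul_I,
    Complex.norm_exp_ofReal_mul_I]
  have h1 := hA (w + s)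
  have h2 := hA (w - s)
  norm_num
  linarith

/-- Bernstein's inequality on the frequency side: `-2πi x` is replaced by its triangle-wave
expansion on the support of `G`. -/
lemma norm_fourier_mul_le (G : ℝ → ℂ) (hG : Integrable G) (A σ : ℝ) (hσ : 0 < σ)
    (hA : ∀ w, ‖𝓕 G w‖ ≤ A) (hsupp : ∀ ξ : ℝ, σ < 2 * π * |ξ| → G ξ = 0) (w : ℝ) :
    ‖𝓕 (fun x : ℝ => (-2 * π * Complex.I * x) • G x) w‖ ≤ A * σ := by
  have hπ := Real.pi_pos
  let c : ℕ → ℝ := fun k => 8 * σ / π ^ 2 * (1 / ((2 * k + 1 : ℕ) : ℝ) ^ 2)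
  let θ : ℕ → ℝ → ℝ := fun k x =>
    π * (2 * k + 1 : ℕ) / 2 - 2 * π * x * (π * (2 * k + 1 : ℕ) / (2 * σ))
  let T : ℕ → ℝ → ℂ := fun k x => (c k : ℂ) *
    (Complex.exp (↑(-2 * π * x * w) * Complex.I) * ((Real.cos (θ k x) : ℝ) * G x))
  have hc0 : ∀ k, 0 ≤ c k := fun k => by positivity
  have hc : HasSum c σ := by
    have h := (triangle_cos 0 ⟨le_rfl, by norm_num⟩).mul_left (8 * σ / π ^ 2)
    simp only [mul_zero, Real.cos_zero, mul_one, sub_zero] at h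
    refine hasSum_of_eq h (fun _ => rfl) ?_
    field_simp
  -- The substitution `x ↦ 1/4 - πx/(2σ)` maps the band onto the half period `[0, 1/2]`.
  have hmult : ∀ x : ℝ, 2 * π * |x| ≤ σ →
      HasSum (fun k => c k * Real.cos (θ k x)) (2 * π * x) := by
    intro x hx
    have hx' : |2 * π * x| ≤ σ := by
      rwa [abs_mul, abs_of_pos (by positivity : (0 : ℝ) < 2 * π)]
    obtain ⟨hl, hr⟩ := abs_le.1 hx'
    have hb : |2 * π * x / (4 * σ)| ≤ 1 / 4 := by
      rw [abs_div, abs_of_pos (by positivity : (0 : ℝ) < 4 * σ), div_le_iff₀ (by positivity)]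
      linarith
    obtain ⟨hl, hr⟩ := abs_le.1 hb
    have h := (triangle_cos (1 / 4 - 2 * π * x / (4 * σ))
      ⟨by linarith, by linarith⟩).mul_left (8 * σ / π ^ 2)
    refine hasSum_of_eq h (fun k => ?_) ?_
    · have : θ k x = 2 * π * (2 * k + 1 : ℕ) * (1 / 4 - 2 * π * x / (4 * σ)) := by
        simp only [θ]
        field_simp
        ring
      rw [this]
      simp only [c]
      ring
    · field_simp
      ring
  have hT : ∀ x, HasSum (fun k => T k x)
      (Complex.exp (↑(-2 * π * x * w) * Complex.I) * ((2 * π * x : ℝ) * G x)) := by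
    intro x
    rcases le_or_gt (2 * π * |x|) σ with hx | hx
    · have h := ((Complex.hasSum_ofReal.2 (hmult x hx)).mul_left
        (Complex.exp (↑(-2 * π * x * w) * Complex.I))).mul_right (G x)
      refine hasSum_of_eq h (fun k => ?_) ?_
      · simp only [T]
        push_cast
        ring
      · ring
    · simp only [T, hsupp x hx, mul_zero]
      exact hasSum_zero
  have hTint : ∀ k, Integrable (T k) := by
    intro k
    refine Integrable.const_mul ?_ _
    refine Integrable.bdd_mul (c := 1) ?_ (by fun_prop) (Filter.Eventually.of_forall fun x => ?_)
    · refine hG.bdd_mul (c := 1) ?_ (Filter.Eventually.of_forall fun x => ?_)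
      · exact (by fun_prop : Continuous fun x : ℝ => ((Real.cos (θ k x) : ℝ) : ℂ)).aestronglyMeasurable
      · rw [Complex.norm_real]
        exact Real.abs_cos_le_one _
    · rw [Complex.norm_exp_ofReal_mul_I]
  have hTnorm : Summable fun k => ∫ x, ‖T k x‖ := by
    refine Summable.of_nonneg_of_le (fun k => integral_nonneg fun x => norm_nonneg _) (fun k => ?_)
      (hc.summable.mul_right (∫ x, ‖G x‖))
    rw [← integral_const_mul]
    refine integral_mono (hTint k).norm (hG.norm.const_mul _) fun x => ?_
    simp only [T]
    rw [norm_mul, norm_mul, norm_mul, Complex.norm_exp_ofReal_mul_I, Complex.norm_real,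
      Complex.norm_real, Real.norm_of_nonneg (hc0 k), one_mul]
    refine mul_le_mul_of_nonneg_left ?_ (hc0 k)
    exact mul_le_of_le_one_left (norm_nonneg _) (Real.abs_cos_le_one _)
  have hsum := hasSum_integral_of_summable_integral_norm hTint hTnorm
  have hE : 𝓕 (fun x : ℝ => (-2 * π * Complex.I * x) • G x) w =
      -Complex.I * ∫ x, ∑' k, T k x := by
    rw [Real.fourier_real_eq_integral_exp_smul, ← integral_const_mul]
    congr 1
    ext x
    rw [(hT x).tsum_eq]
    simp only [smul_eq_mul]
    push_cast
    ring
  have hbd : ∀ k, ‖∫ x, T k x‖ ≤ A * c k := by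
    intro k
    simp only [T]
    rw [integral_const_mul, norm_mul, Complex.norm_real, Real.norm_of_nonneg (hc0 k), mul_comm]
    exact mul_le_mul_of_nonneg_right (norm_integral_cos_le G hG A hA _ _ w) (hc0 k)
  rw [hE, norm_mul, norm_neg, Complex.norm_I, one_mul, ← hsum.tsum_eq]
  exact tsum_of_norm_bounded (hc.mul_left A) hbd

/-- Bernstein's inequality in Lipschitz form, with the sharp constant `A * σ`. -/
lemma abs_sub_le_of_bandlimited (f : ℝ → ℝ) (σ A : ℝ) (hσ : 0 < σ) (hA : 0 < A) (hf : Continuous f)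
    (hbl : Bandlimited σ f) (hdecay : ∀ t : ℝ, |f t| ≤ A / (1 + t ^ 2)) (s t : ℝ) :
    |f t - f s| ≤ A * σ * |t - s| := by
  have hπ := Real.pi_pos
  let F : ℝ → ℂ := fun t => (f t : ℂ)
  have hFc : Continuous F := by fun_prop
  have hFint : Integrable F := by
    refine (integrable_inv_one_add_sq.const_mul A).mono' hFc.aestronglyMeasurable
      (Filter.Eventually.of_forall fun x => ?_)
    simpa only [F, Complex.norm_real, Real.norm_eq_abs, div_eq_mul_inv] using hdecay x
  have hFb : ∀ x, ‖F x‖ ≤ A := by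
    intro x
    simp only [F, Complex.norm_real, Real.norm_eq_abs]
    exact (hdecay x).trans (div_le_self hA.le (by nlinarith [sq_nonneg x]))
  let G : ℝ → ℂ := 𝓕 F
  have hGc : Continuous G :=
    VectorFourier.fourierIntegral_continuous Real.continuous_fourierChar
      (by exact continuous_inner) hFint
  have hGsupp : ∀ ξ : ℝ, σ < 2 * π * |ξ| → G ξ = 0 := hbl
  have hGcomp : HasCompactSupport G := by
    refine HasCompactSupport.intro (isCompact_Icc (a := -(σ / (2 * π))) (b := σ / (2 * π)))
      fun x hx => hGsupp x ?_
    by_contra! h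
    refine hx (abs_le.1 ?_)
    rw [le_div_iff₀ (by positivity)]
    linarith
  have hGint : Integrable G := hGc.integrable_of_hasCompactSupport hGcomp
  have hGint' : Integrable (fun x : ℝ => x • G x) :=
    (continuous_id.smul hGc).integrable_of_hasCompactSupport hGcomp.smul_left
  have hinv : ∀ w, 𝓕 G w = F (-w) := by
    intro w
    have h := hFint.fourierInv_fourier_eq hGint (hFc.continuousAt (x := -w))
    rw [Real.fourierInv_eq_fourier_neg, neg_neg] at h
    exact h
  have hGb : ∀ w, ‖𝓕 G w‖ ≤ A := fun w => by
    rw [hinv]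
    exact hFb _
  have h := convex_univ.norm_image_sub_le_of_norm_hasDerivWithin_le (𝕜 := ℝ) (f := 𝓕 G)
    (fun x _ => (Real.hasDerivAt_fourier hGint hGint' x).hasDerivWithinAt)
    (fun x _ => norm_fourier_mul_le G hGint A σ hσ hGb hGsupp x)
    (Set.mem_univ (-s)) (Set.mem_univ (-t))
  rw [hinv, hinv, neg_neg, neg_neg, ← Complex.ofReal_sub, Complex.norm_real, Real.norm_eq_abs,
    Real.norm_eq_abs] at h
  rwa [show -t - -s = -(t - s) by ring, abs_neg] at h

/-- Both sides are the area of the region between the graphs of `g₁` and `g₂`, sliced vertically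
and horizontally. -/
lemma lintegral_abs_sub_inverse (g₁ g₂ k₁ k₂ : ℝ → ℝ) (hg₁ : Continuous g₁) (hg₂ : Continuous g₂)
    (hm₁ : StrictMono g₁) (hm₂ : StrictMono g₂)
    (hk₁ : ∀ u, g₁ (k₁ u) = u) (hk₂ : ∀ u, g₂ (k₂ u) = u) :
    ∫⁻ u, ENNReal.ofReal |k₁ u - k₂ u| = ∫⁻ t, ENNReal.ofReal |g₁ t - g₂ t| := by
  let S : Set (ℝ × ℝ) := {p | min (g₁ p.1) (g₂ p.1) < p.2} ∩ {p | p.2 < max (g₁ p.1) (g₂ p.1)}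
  have hS : MeasurableSet S :=
    ((isOpen_lt (by fun_prop) (by fun_prop)).inter
      (isOpen_lt (by fun_prop) (by fun_prop))).measurableSet
  have h1 := Measure.prod_apply (μ := (volume : Measure ℝ)) (ν := (volume : Measure ℝ)) hS
  have h2 := Measure.prod_apply_symm (μ := (volume : Measure ℝ)) (ν := (volume : Measure ℝ)) hS
  rw [h1] at h2
  convert h2.symm using 1
  · congr 1
    ext u
    have : (fun x => (x, u)) ⁻¹' S = Set.Ioo (min (k₁ u) (k₂ u)) (max (k₁ u) (k₂ u)) := by
      ext x
      have a1 : g₁ x < u ↔ x < k₁ u := by rw [← hm₁.lt_iff_lt (b := k₁ u), hk₁]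
      have a2 : g₂ x < u ↔ x < k₂ u := by rw [← hm₂.lt_iff_lt (b := k₂ u), hk₂]
      have b1 : u < g₁ x ↔ k₁ u < x := by rw [← hm₁.lt_iff_lt (a := k₁ u), hk₁]
      have b2 : u < g₂ x ↔ k₂ u < x := by rw [← hm₂.lt_iff_lt (a := k₂ u), hk₂]
      simp only [S, Set.mem_preimage, Set.mem_inter_iff, Set.mem_ofPred_eq, Set.mem_Ioo, min_lt_iff, lt_max_iff,
        a1, a2, b1, b2]
      tauto
    rw [this, Real.volume_Ioo, max_sub_min_eq_abs, abs_sub_comm]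
  · congr 1
    ext t
    have : Prod.mk t ⁻¹' S = Set.Ioo (min (g₁ t) (g₂ t)) (max (g₁ t) (g₂ t)) := rfl
    rw [this, Real.volume_Ioo, max_sub_min_eq_abs, abs_sub_comm]

lemma strictMono_add_of_lipschitz (f : ℝ → ℝ) (L α : ℝ) (hL : L < α)
    (hf : ∀ s t, |f t - f s| ≤ L * |t - s|) : StrictMono (fun t => α * t + f t) := by
  intro s t hst
  have h := (abs_le.1 (hf s t)).1
  rw [abs_of_pos (sub_pos.2 hst)] at h
  have : 0 < (α - L) * (t - s) := mul_pos (sub_pos.2 hL) (sub_pos.2 hst)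
  simp only
  linarith

lemma surjective_add_of_bounded (f : ℝ → ℝ) (A α : ℝ) (hα : 0 < α) (hf : Continuous f)
    (hb : ∀ t, |f t| ≤ A) : Function.Surjective (fun t => α * t + f t) := by
  refine Continuous.surjective (by fun_prop) ?_ ?_
  · exact Filter.tendsto_atTop_add_right_of_le _ (-A) (Filter.tendsto_id.const_mul_atTop hα)
      fun t => (abs_le.1 (hb t)).1
  · exact Filter.tendsto_atBot_add_right_of_ge _ A (Filter.tendsto_id.const_mul_atBot hα)
      fun t => (abs_le.1 (hb t)).2

/-- The transformation `M_α` preserves the `L¹` distance: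
`‖h₁ − h₂‖₁ = ‖f₁ − f₂‖₁`. -/
theorem l1_distance_preserved
    (f₁ f₂ : ℝ → ℝ) (σ A α : ℝ) (hσ : 0 < σ) (hA : 0 < A)
    (hf₁ : Continuous f₁) (hf₂ : Continuous f₂)
    (hbl₁ : Bandlimited σ f₁) (hbl₂ : Bandlimited σ f₂)
    (hdecay₁ : ∀ t : ℝ, |f₁ t| ≤ A / (1 + t ^ 2))
    (hdecay₂ : ∀ t : ℝ, |f₂ t| ≤ A / (1 + t ^ 2))
    (hα : A * σ < α) :
    ∫ u : ℝ, |(Function.invFun (fun t : ℝ => α * t + f₁ t) u - u / α) -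
        (Function.invFun (fun t : ℝ => α * t + f₂ t) u - u / α)|
      = ∫ t : ℝ, |f₁ t - f₂ t| := by
  have hα0 : 0 < α := (mul_pos hA hσ).trans hα
  have hle : ∀ t : ℝ, A / (1 + t ^ 2) ≤ A := fun t =>
    div_le_self hA.le (by nlinarith [sq_nonneg t])
  have hm₁ := strictMono_add_of_lipschitz f₁ _ α hα (abs_sub_le_of_bandlimited f₁ σ A hσ hA hf₁ hbl₁ hdecay₁)
  have hm₂ := strictMono_add_of_lipschitz f₂ _ α hα (abs_sub_le_of_bandlimited f₂ σ A hσ hA hf₂ hbl₂ hdecay₂)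
  have hk₁ := Function.rightInverse_invFun
    (surjective_add_of_bounded f₁ A α hα0 hf₁ fun t => (hdecay₁ t).trans (hle t))
  have hk₂ := Function.rightInverse_invFun
    (surjective_add_of_bounded f₂ A α hα0 hf₂ fun t => (hdecay₂ t).trans (hle t))
  set k₁ := Function.invFun (fun t : ℝ => α * t + f₁ t)
  set k₂ := Function.invFun (fun t : ℝ => α * t + f₂ t)
  have hmeas : ∀ g k : ℝ → ℝ, StrictMono g → Function.RightInverse k g → Measurable k := by
    intro g k hg hk
    refine Monotone.measurable fun u v huv => ?_
    rw [← hg.le_iff_le, hk u, hk v]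
    exact huv
  have hmk₁ := hmeas _ k₁ hm₁ hk₁
  have hmk₂ := hmeas _ k₂ hm₂ hk₂
  have key := lintegral_abs_sub_inverse _ _ k₁ k₂ (by fun_prop) (by fun_prop) hm₁ hm₂ hk₁ hk₂
  simp only [sub_sub_sub_cancel_right]
  have hmabs : AEStronglyMeasurable (fun u => |k₁ u - k₂ u|) :=
    (hmk₁.sub hmk₂).norm.aestronglyMeasurable
  rw [integral_eq_lintegral_of_nonneg_ae (Filter.Eventually.of_forall fun _ => abs_nonneg _) hmabs,
    integral_eq_lintegral_of_nonneg_ae (Filter.Eventually.of_forall fun _ => abs_nonneg _)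
      (by fun_prop), key]
  simp only [add_sub_add_left_eq_sub]
end
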